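/- Let a ≥ 1, k = 2^a − 1, V a set of size 2k, and D ⊆ binom(V,k) a (k−1)-(2k, k, 2^{a−1}) design, meaning every (k−1)-subset of V is contained in exactly 2^{a−1} members of D. Then D is anti-complementary: for every k-subset K of V, K ∈ D if and only if Kᶜ ∉ D. -/

import Mathlib

open Finset

/-- Sum of `f` over all `k`-subsets containing `S`. -/
def upSum {α : Type*} [Fintype α] [DecidableEq α] (k : ℕ) (f : Finset α → ℤ)
    (S : Finset α) : ℤ :=
  ∑ B ∈ powersetCard k (univ : Finset α), if S ⊆ B then f B else 0

lemma upSum_rec {α : Type*} [Fintype α] [DecidableEq α] (k : ℕ) (f : Finset α → ℤ)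
    (S : Finset α) :
    ((k : ℤ) - #S) * upSum k f S = ∑ x ∈ univ \ S, upSum k f (insert x S) := by
  unfold upSum
  rw [Finset.sum_comm, Finset.mul_sum]
  refine Finset.sum_congr rfl fun B hB => ?_
  have hB' : #B = k := by simpa [mem_powersetCard] using hB
  by_cases h : S ⊆ B
  · have h1 : ∀ x, (insert x S ⊆ B) ↔ x ∈ B := fun x => by
      rw [insert_subset_iff]; exact and_iff_left h
    simp only [h1, h, if_true]
    rw [← Finset.sum_filter, Finset.sum_const]
    have h2 : (univ \ S).filter (fun x => x ∈ B) = B \ S := by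
      ext x; simp [and_comm]
    rw [h2, nsmul_eq_mul, Finset.card_sdiff_of_subset h, Nat.cast_sub (card_le_card h), hB']
  · have h1 : ∀ x, ¬ (insert x S ⊆ B) := fun x hx => h ((subset_insert _ _).trans hx)
    simp [h, h1]

lemma upSum_top {α : Type*} [Fintype α] [DecidableEq α] (k : ℕ) (f : Finset α → ℤ)
    (S : Finset α) (hS : #S = k) : upSum k f S = f S := by
  unfold upSum
  rw [Finset.sum_eq_single S]
  · simp
  · intro B hB hne
    have hB' : #B = k := by simpa [mem_powersetCard] using hB
    rw [if_neg]
    intro h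
    exact hne (eq_of_subset_of_card_le h (by omega)).symm
  · intro h; simp [mem_powersetCard, hS] at h

lemma upSum_low {α : Type*} [Fintype α] [DecidableEq α] (k : ℕ) (f : Finset α → ℤ)
    (h0 : ∀ T : Finset α, #T + 1 = k → upSum k f T = 0) :
    ∀ (d : ℕ) (T : Finset α), #T + 1 + d = k → upSum k f T = 0 := by
  intro d
  induction d with
  | zero => intro T hT; exact h0 T hT
  | succ d ih =>
    intro T hT
    have h := upSum_rec k f T
    rw [Finset.sum_eq_zero] at h
    · rcases mul_eq_zero.1 h with h | h
      · omega
      · exact h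
    · intro x hx
      apply ih
      rw [card_insert_of_notMem (by simpa using hx)]
      omega

lemma upSum_compl {α : Type*} [Fintype α] [DecidableEq α] (k : ℕ) (f : Finset α → ℤ)
    (hn : Fintype.card α = 2 * k)
    (h0 : ∀ T : Finset α, #T + 1 = k → upSum k f T = 0) (K : Finset α) (hK : #K = k) :
    f (univ \ K) = (-1) ^ k * f K := by
  have key : ∑ S ∈ K.powerset, (-1 : ℤ) ^ #S * upSum k f S = (-1) ^ k * f K := by
    rw [Finset.sum_eq_single K]
    · rw [hK, upSum_top k f K hK]
    · intro S hS hne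
      have hs : #S < #K := card_lt_card (lt_of_le_of_ne (mem_powerset.1 hS) hne)
      rw [upSum_low k f h0 (k - 1 - #S) S (by omega), mul_zero]
    · intro h; simp at h
  rw [← key]
  unfold upSum
  simp only [Finset.mul_sum]
  rw [Finset.sum_comm]
  have hc : #(univ \ K) = k := by
    rw [card_sdiff_of_subset (subset_univ _), card_univ]; omega
  have h2 : ∀ B : Finset α, ∑ S ∈ K.powerset, (-1 : ℤ) ^ #S * (if S ⊆ B then f B else 0)
      = (if K ∩ B = ∅ then 1 else 0) * f B := by
    intro B
    rw [← Finset.sum_powerset_neg_one_pow_card, Finset.sum_mul]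
    have : (K ∩ B).powerset = K.powerset.filter (fun S => S ⊆ B) := by
      ext S; rw [mem_powerset, mem_filter, mem_powerset, subset_inter_iff]
    rw [this, Finset.sum_filter]
    refine Finset.sum_congr rfl fun S _ => ?_
    split_ifs <;> simp
  simp only [h2]
  rw [Finset.sum_eq_single (univ \ K)]
  · simp
  · intro B hB hne
    have hB' : #B = k := by simpa [mem_powersetCard] using hB
    rw [if_neg, zero_mul]
    intro h
    apply hne
    apply eq_of_subset_of_card_le
    · intro x hx
      simp only [mem_sdiff, mem_univ, true_and]
      intro hxK
      have : x ∈ K ∩ B := mem_inter.2 ⟨hxK, hx⟩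
      simp [h] at this
    · omega
  · intro h; exact absurd (mem_powersetCard.2 ⟨subset_univ _, hc⟩) h

/-- Let `k = 2^a - 1` with `a ≥ 1`, `|V| = 2k`, and `D` a `(k-1)-(2k, k, 2^{a-1})`
design. Then `D` is anti-complementary: `K ∈ D ↔ Kᶜ ∉ D` for every `k`-subset `K`. -/
theorem halving_root_anti_complementary {α : Type*} [Fintype α] [DecidableEq α]
    (a k : ℕ) (ha : 1 ≤ a) (hk : k = 2 ^ a - 1) (hn : Fintype.card α = 2 * k)
    (D : Finset (Finset α))
    (hD : D ⊆ Finset.powersetCard k (Finset.univ : Finset α))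
    (hdesign : ∀ T ∈ Finset.powersetCard (k - 1) (Finset.univ : Finset α),
      (D.filter (fun B => T ⊆ B)).card = 2 ^ (a - 1)) :
    ∀ K ∈ Finset.powersetCard k (Finset.univ : Finset α),
      (K ∈ D ↔ Finset.univ \ K ∉ D) := by
  intro K hK
  have hK' : #K = k := by simpa [mem_powersetCard] using hK
  obtain ⟨b, rfl⟩ : ∃ b, a = b + 1 := ⟨a - 1, by omega⟩
  have hp : 1 ≤ 2 ^ b := Nat.one_le_two_pow
  have hk2 : k = 2 * 2 ^ b - 1 := by rw [hk, pow_succ, mul_comm]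
  have hodd : Odd k := ⟨2 ^ b - 1, by omega⟩
  have h0 : ∀ T : Finset α, #T + 1 = k →
      upSum k (fun B => if B ∈ D then (1 : ℤ) else -1) T = 0 := by
    intro T hT
    have e1 : upSum k (fun _ => (1 : ℤ)) T = 2 * 2 ^ b := by
      have h := upSum_rec k (fun _ => (1 : ℤ)) T
      rw [Finset.sum_congr rfl (fun x hx => upSum_top k _ (insert x T)
        (by rw [card_insert_of_notMem (by simpa using hx)]; exact hT))] at h
      have h3 : (k : ℤ) - #T = 1 := by omega
      rw [h3, one_mul, Finset.sum_const, card_sdiff_of_subset (subset_univ _), card_univ,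
        hn] at h
      rw [h]
      have : 2 * k - #T = 2 * 2 ^ b := by omega
      rw [this]; simp
    have e2 : upSum k (fun B => if B ∈ D then (1 : ℤ) else 0) T = 2 ^ b := by
      have h := hdesign T (mem_powersetCard.2 ⟨subset_univ _, by omega⟩)
      rw [Nat.add_sub_cancel] at h
      have h' : ((#(D.filter (fun B => T ⊆ B)) : ℕ) : ℤ) = 2 ^ b := by rw [h]; simp
      rw [← h', Finset.card_filter]
      push_cast
      unfold upSum
      rw [← Finset.sum_subset hD]
      · refine Finset.sum_congr rfl fun B hB => ?_
        simp [hB]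
      · intro B _ hB
        simp [hB]
    have e3 : upSum k (fun B => if B ∈ D then (1 : ℤ) else -1) T
        = 2 * upSum k (fun B => if B ∈ D then (1 : ℤ) else 0) T
          - upSum k (fun _ => (1 : ℤ)) T := by
      unfold upSum
      rw [Finset.mul_sum, ← Finset.sum_sub_distrib]
      refine Finset.sum_congr rfl fun B _ => ?_
      by_cases hBD : B ∈ D <;> by_cases hTB : T ⊆ B <;> simp [hBD, hTB]
    rw [e3, e1, e2]; ring
  have h := upSum_compl k _ hn h0 K hK'
  rw [hodd.neg_one_pow] at h
  by_cases h1 : K ∈ D <;> by_cases h2 : univ \ K ∈ D <;> simp [h1, h2] at h ⊢
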